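/- Let a and b be positive semidefinite n×n complex matrices and let 1 < p < ∞ with conjugate exponent p′ = p/(p−1). Then Re Tr(a · b^{p−1}) ≤ (1/p) · Tr(a^p) + (1/p′) · Tr(b^p). (This Young-type trace inequality is established in the proof of the paper's Lemma 2.4 via the Hölder and Young inequalities.) -/

import Mathlib

open Matrix
open scoped ComplexOrder

/-- The fractional power `a^r` of a matrix, defined via the continuous functional
calculus (equivalently, via the spectral decomposition for Hermitian matrices). -/
noncomputable def matRpow {n : ℕ} (a : Matrix (Fin n) (Fin n) ℂ) (r : ℝ) :
    Matrix (Fin n) (Fin n) ℂ :=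
  cfc (fun x : ℝ => x ^ r) a

/-!
If `a` and `b` are Hermitian with orthonormal eigenbases `uᵢ`, `vⱼ` and eigenvalues `λᵢ`, `μⱼ`,
then `Tr (f(a) g(b)) = ∑ᵢⱼ f(λᵢ) g(μⱼ) |⟨uᵢ, vⱼ⟩|²`. The weights are nonnegative, so an inequality
between sums of products `f(x) g(y)` on the spectra passes to traces (Klein's inequality); Young's
inequality for real numbers thus gives `Re Tr (a b) ≤ Tr |a|^p / p + Tr |b|^q / q`. For positive
semidefinite `b`, replace `b` by `b^(p-1)` and use `(p - 1) q = p`.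
-/

section TraceInequalities

variable {𝕜 m n : Type*} [RCLike 𝕜] [Fintype m] [Fintype n]

lemma trace_diagonal_mul_mul_diagonal_mul_conjTranspose [DecidableEq m] [DecidableEq n]
    (d : m → 𝕜) (M : Matrix m n 𝕜) (e : n → 𝕜) :
    (diagonal d * M * (diagonal e * Mᴴ)).trace = ∑ i, ∑ j, d i * e j * (‖M i j‖ ^ 2 : ℝ) := by
  rw [trace]
  refine Finset.sum_congr rfl fun i _ => ?_
  rw [diag_apply, mul_apply]
  refine Finset.sum_congr rfl fun j _ => ?_
  rw [diagonal_mul, diagonal_mul, conjTranspose_apply, RCLike.star_def, RCLike.ofReal_pow,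
    ← RCLike.mul_conj]
  ring

variable [DecidableEq n] {a b : Matrix n n 𝕜}

/-- The squared modulus `|⟨uᵢ, vⱼ⟩|²` of the inner product of the `i`-th eigenvector of `a` with the
`j`-th eigenvector of `b`, for the orthonormal eigenbases chosen by `Matrix.IsHermitian`. -/
noncomputable def eigenvectorOverlap (ha : a.IsHermitian) (hb : b.IsHermitian) (i j : n) : ℝ :=
  ‖inner 𝕜 (ha.eigenvectorBasis i) (hb.eigenvectorBasis j)‖ ^ 2

lemma eigenvectorOverlap_nonneg (ha : a.IsHermitian) (hb : b.IsHermitian) (i j : n) :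
    0 ≤ eigenvectorOverlap ha hb i j :=
  sq_nonneg _

lemma star_eigenvectorUnitary_mul_eigenvectorUnitary_apply (ha : a.IsHermitian)
    (hb : b.IsHermitian) (i j : n) :
    (star (ha.eigenvectorUnitary : Matrix n n 𝕜) * (hb.eigenvectorUnitary : Matrix n n 𝕜)) i j =
      inner 𝕜 (ha.eigenvectorBasis i) (hb.eigenvectorBasis j) := by
  rw [EuclideanSpace.inner_eq_star_dotProduct, dotProduct_comm]
  rfl

lemma trace_cfc_mul_cfc (ha : a.IsHermitian) (hb : b.IsHermitian) (f g : ℝ → ℝ) :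
    (cfc f a * cfc g b).trace =
      ((∑ i, ∑ j, f (ha.eigenvalues i) * g (hb.eigenvalues j) *
        eigenvectorOverlap ha hb i j : ℝ) : 𝕜) := by
  rw [ha.cfc_eq, hb.cfc_eq, IsHermitian.cfc, IsHermitian.cfc, Unitary.conjStarAlgAut_apply,
    Unitary.conjStarAlgAut_apply]
  set U := (ha.eigenvectorUnitary : Matrix n n 𝕜) with hU
  set V := (hb.eigenvectorUnitary : Matrix n n 𝕜) with hV
  set D : Matrix n n 𝕜 := diagonal (RCLike.ofReal ∘ f ∘ ha.eigenvalues)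
  set E : Matrix n n 𝕜 := diagonal (RCLike.ofReal ∘ g ∘ hb.eigenvalues)
  calc (U * D * star U * (V * E * star V)).trace
      = (D * (star U * V) * (E * (star U * V)ᴴ)).trace := by
        rw [← star_eq_conjTranspose, star_mul, star_star, mul_assoc U, mul_assoc U,
          trace_mul_comm U]
        simp only [mul_assoc]
    _ = _ := by
        rw [trace_diagonal_mul_mul_diagonal_mul_conjTranspose]
        simp only [hU, hV, star_eigenvectorUnitary_mul_eigenvectorUnitary_apply,
          eigenvectorOverlap, Function.comp_apply, RCLike.ofReal_sum, RCLike.ofReal_mul]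

theorem sum_mul_re_trace_cfc_mul_cfc_nonneg {ι : Type*} {s : Finset ι} {c : ι → ℝ}
    {f g : ι → ℝ → ℝ} (ha : a.IsHermitian) (hb : b.IsHermitian)
    (h : ∀ x ∈ spectrum ℝ a, ∀ y ∈ spectrum ℝ b, 0 ≤ ∑ k ∈ s, c k * (f k x * g k y)) :
    0 ≤ ∑ k ∈ s, c k * RCLike.re (cfc (f k) a * cfc (g k) b).trace := by
  simp only [trace_cfc_mul_cfc ha hb, RCLike.ofReal_re, Finset.mul_sum, ← mul_assoc]
  rw [Finset.sum_comm]
  refine Finset.sum_nonneg fun i _ => ?_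
  rw [Finset.sum_comm]
  refine Finset.sum_nonneg fun j _ => ?_
  rw [← Finset.sum_mul]
  refine mul_nonneg ?_ (eigenvectorOverlap_nonneg ha hb i j)
  simpa only [mul_assoc] using
    h _ (ha.eigenvalues_mem_spectrum_real i) _ (hb.eigenvalues_mem_spectrum_real j)

theorem re_trace_cfc_mul_cfc_le_add {f g φ ψ : ℝ → ℝ} {s t : ℝ}
    (ha : a.IsHermitian) (hb : b.IsHermitian)
    (h : ∀ x ∈ spectrum ℝ a, ∀ y ∈ spectrum ℝ b, f x * g y ≤ s * φ x + t * ψ y) :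
    RCLike.re (cfc f a * cfc g b).trace ≤
      s * RCLike.re (cfc φ a).trace + t * RCLike.re (cfc ψ b).trace := by
  have klein := sum_mul_re_trace_cfc_mul_cfc_nonneg (s := Finset.univ) (c := ![-1, s, t])
    (f := ![f, φ, fun _ => 1]) (g := ![g, fun _ => 1, ψ]) ha hb fun x hx y hy => by
      simp only [Fin.sum_univ_three, cons_val]
      linarith [h x hx y hy]
  simp only [Fin.sum_univ_three, cons_val, cfc_const_one ℝ a ha.isSelfAdjoint,
    cfc_const_one ℝ b hb.isSelfAdjoint, mul_one, one_mul] at klein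
  linarith

theorem trace_young_general {p q : ℝ} (ha : a.IsHermitian) (hb : b.IsHermitian)
    (hpq : p.HolderConjugate q) :
    RCLike.re (a * b).trace ≤
      (1 / p) * RCLike.re (cfc (fun x : ℝ => |x| ^ p) a).trace +
        (1 / q) * RCLike.re (cfc (fun x : ℝ => |x| ^ q) b).trace := by
  have young : ∀ x ∈ spectrum ℝ a, ∀ y ∈ spectrum ℝ b,
      x * y ≤ (1 / p) * |x| ^ p + (1 / q) * |y| ^ q := fun x _ y _ =>
    (Real.young_inequality x y hpq).trans_eq (by ring)
  have trace_le := re_trace_cfc_mul_cfc_le_add ha hb young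
  rwa [cfc_id' ℝ a ha.isSelfAdjoint, cfc_id' ℝ b hb.isSelfAdjoint] at trace_le

lemma cfc_cfc (ha : a.IsHermitian) (f g : ℝ → ℝ) : cfc g (cfc f a) = cfc (g ∘ f) a :=
  (cfc_comp g f a ha.isSelfAdjoint ((finite_real_spectrum.image f).continuousOn g)
    (finite_real_spectrum.continuousOn f)).symm

open scoped MatrixOrder in
lemma cfc_congr_of_posSemidef {f g : ℝ → ℝ} (ha : a.PosSemidef) (h : Set.EqOn f g (Set.Ici 0)) :
    cfc f a = cfc g a :=
  cfc_congr fun _ hx => h (spectrum_nonneg_of_nonneg ha.nonneg hx)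

end TraceInequalities

lemma isHermitian_matRpow {n : ℕ} (a : Matrix (Fin n) (Fin n) ℂ) (r : ℝ) :
    (matRpow a r).IsHermitian :=
  cfc_predicate _ a

lemma cfc_abs_rpow_eq_matRpow {n : ℕ} {a : Matrix (Fin n) (Fin n) ℂ} (ha : a.PosSemidef) (r : ℝ) :
    cfc (fun x : ℝ => |x| ^ r) a = matRpow a r :=
  cfc_congr_of_posSemidef ha fun x (hx : 0 ≤ x) => by simp only [abs_of_nonneg hx]

lemma cfc_abs_rpow_matRpow {n : ℕ} {a : Matrix (Fin n) (Fin n) ℂ} (ha : a.PosSemidef) (r s : ℝ) :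
    cfc (fun x : ℝ => |x| ^ s) (matRpow a r) = matRpow a (r * s) := by
  rw [matRpow, cfc_cfc ha.isHermitian]
  refine cfc_congr_of_posSemidef ha fun x (hx : 0 ≤ x) => ?_
  simp only [Function.comp_apply, abs_of_nonneg (Real.rpow_nonneg hx r), Real.rpow_mul hx]

/-- Young-type trace inequality from the proof of Lemma 2.4: for positive
semidefinite `a, b` and `1 < p < ∞` with conjugate exponent `p′ = p/(p−1)`,
`Re Tr(a b^{p−1}) ≤ (1/p) Tr(a^p) + (1/p′) Tr(b^p)`. -/
theorem trace_young {n : ℕ} (a b : Matrix (Fin n) (Fin n) ℂ)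
    (ha : a.PosSemidef) (hb : b.PosSemidef)
    (p : ℝ) (hp : 1 < p) :
    ((a * matRpow b (p - 1)).trace).re
      ≤ (1 / p) * ((matRpow a p).trace).re
        + (1 / (p / (p - 1))) * ((matRpow b p).trace).re := by
  have hpq : p.HolderConjugate (p / (p - 1)) := .conjExponent hp
  have young := trace_young_general ha.isHermitian (isHermitian_matRpow b (p - 1)) hpq
  rwa [cfc_abs_rpow_eq_matRpow ha, cfc_abs_rpow_matRpow hb, hpq.sub_one_mul_conj] at young
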